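/- Let the random point set X consist of n points obtained by independent Gaussian perturbations (mean 0, standard deviation σ ≤ 1) of fixed points in [0,1]^d, conditioned on X ⊆ [−D/2, D/2]^d with D = √(2n ln(nkd)), and assume 4kd ≤ n. Let Δ_min denote the minimum total potential improvement over all sequences of Hartigan–Wong iterations (into k clusters) in which exactly 4kd distinct points switch clusters. Then for every ε ≤ 1, the probability that Δ_min ≤ ε is at most (c · k^{8kd+4} · d^{11} · D^5 · n^{8 + 1/d} · ε / σ^4)^{kd} for some absolute constant c > 0. -/

import Mathlib

open MeasureTheory ProbabilityTheory

noncomputable section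

/-- The identification of `Fin d → ℝ` with `EuclideanSpace ℝ (Fin d)`. -/
def toEuc {d : ℕ} (x : Fin d → ℝ) : EuclideanSpace ℝ (Fin d) :=
  (WithLp.equiv 2 (Fin d → ℝ)).symm x

/-- The indices of the points assigned to cluster `i` by the labeling `cl`. -/
def clusterIdx {n k : ℕ} (cl : Fin n → Fin k) (i : Fin k) : Finset (Fin n) :=
  Finset.univ.filter fun j => cl j = i

/-- The center of mass of cluster `i` of the point set `X` under the labeling `cl`. -/
def clusterCtr {n k d : ℕ} (X : Fin n → EuclideanSpace ℝ (Fin d)) (cl : Fin n → Fin k)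
    (i : Fin k) : EuclideanSpace ℝ (Fin d) :=
  ((clusterIdx cl i).card : ℝ)⁻¹ • ∑ j ∈ clusterIdx cl i, X j

/-- The `k`-means potential `Φ` of the point set `X` partitioned according to `cl`. -/
def kmeansPot {n k d : ℕ} (X : Fin n → EuclideanSpace ℝ (Fin d)) (cl : Fin n → Fin k) : ℝ :=
  ∑ i : Fin k, ∑ j ∈ clusterIdx cl i, ‖X j - clusterCtr X cl i‖ ^ 2

/-- `cl'` is obtained from `cl` by reassigning a single point to a different cluster. -/
def SingleMove {n k : ℕ} (cl cl' : Fin n → Fin k) : Prop :=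
  ∃ j : Fin n, cl' j ≠ cl j ∧ ∀ j' : Fin n, j' ≠ j → cl' j' = cl j'

/-- The distribution of `n` points, the `i`-th obtained by perturbing `Y i ∈ [0,1]^d` by an
independent `d`-dimensional Gaussian of mean `0` and standard deviation `σ`. -/
def perturbedPoints (n d : ℕ) (Y : Fin n → Fin d → ℝ) (σ : ℝ) :
    Measure (Fin n → Fin d → ℝ) :=
  Measure.pi fun i => Measure.pi fun j => gaussianReal (Y i j) ((σ ^ 2).toNNReal)

/-- `D = √(2n·ln(nkd))`. -/
def cubeD (n k d : ℕ) : ℝ := Real.sqrt (2 * n * Real.log ((n : ℝ) * k * d))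

end

lemma cond_pi {ι : Type*} [Fintype ι] {α : ι → Type*} [∀ i, MeasurableSpace (α i)]
    (μ : ∀ i, Measure (α i)) [∀ i, IsProbabilityMeasure (μ i)] (t : ∀ i, Set (α i))
    (ht : ∀ i, MeasurableSet (t i)) (h0 : ∀ i, μ i (t i) ≠ 0) :
    ProbabilityTheory.cond (Measure.pi μ) (Set.univ.pi t)
      = Measure.pi (fun i => ProbabilityTheory.cond (μ i) (t i)) := by
  have : ∀ i, IsProbabilityMeasure (ProbabilityTheory.cond (μ i) (t i)) :=
    fun i => cond_isProbabilityMeasure (h0 i)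
  symm
  apply Measure.pi_eq
  intro s hs
  rw [cond_apply (MeasurableSet.univ_pi ht), ← Set.pi_inter_distrib, Measure.pi_pi, Measure.pi_pi,
    ENNReal.prod_inv_distrib (fun i _ j _ _ => Or.inl (h0 i)), ← Finset.prod_mul_distrib]
  refine Finset.prod_congr rfl fun i _ => ?_
  rw [cond_apply (ht i)]

lemma pi_seq_bound {ι : Type*} [Fintype ι] [DecidableEq ι] {α : ι → Type*}
    [∀ i, MeasurableSpace (α i)]
    (μ : ∀ i, Measure (α i)) [∀ i, IsProbabilityMeasure (μ i)] (p : ENNReal) :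
    ∀ (m : ℕ) (e : Fin m → ι) (B : Fin m → Set (∀ i, α i)), (∀ s, MeasurableSet (B s)) →
      (∀ s ω, μ (e s) {x | Function.update ω (e s) x ∈ B s} ≤ p) →
      (∀ s r, s < r → ∀ ω x, Function.update ω (e r) x ∈ B s ↔ ω ∈ B s) →
      Measure.pi μ (⋂ s, B s) ≤ p ^ m := by
  intro m
  induction m with
  | zero => intro e B _ _ _; simp
  | succ m ih =>
    intro e B hB h1 h2
    have hI := ih (fun s => e s.castSucc) (fun s => B s.castSucc) (fun s => hB _)
      (fun s ω => h1 _ ω) (fun s r hsr => h2 _ _ (by simpa using hsr))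
    set C := ⋂ s : Fin m, B s.castSucc with hC
    have hCm : MeasurableSet C := MeasurableSet.iInter fun s => hB _
    have hset : (⋂ s, B s) = C ∩ B (Fin.last m) := by
      ext ω
      simp only [Set.mem_iInter, hC, Set.mem_inter_iff]
      exact Fin.forall_fin_succ'
    have hCu : ∀ ω x, Function.update ω (e (Fin.last m)) x ∈ C ↔ ω ∈ C := by
      intro ω x
      simp only [hC, Set.mem_iInter]
      exact forall_congr' fun s => h2 _ _ (Fin.castSucc_lt_last s) ω x
    rw [hset]
    have key : ∫⁻ ω, (C ∩ B (Fin.last m)).indicator 1 ω ∂(Measure.pi μ)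
        ≤ ∫⁻ ω, p * C.indicator 1 ω ∂(Measure.pi μ) := by
      apply lintegral_le_of_lmarginal_le {e (Fin.last m)}
      · exact (measurable_one.indicator (hCm.inter (hB _)))
      · exact (measurable_one.indicator hCm).const_mul _
      · rw [lmarginal_singleton, lmarginal_singleton]
        intro ω
        by_cases hω : ω ∈ C
        · have e1 : ∀ x, (C ∩ B (Fin.last m)).indicator (1 : (∀ i, α i) → ENNReal)
              (Function.update ω (e (Fin.last m)) x)
              = ({x | Function.update ω (e (Fin.last m)) x ∈ B (Fin.last m)} :
                Set (α (e (Fin.last m)))).indicator 1 x := by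
            intro x
            by_cases hx : Function.update ω (e (Fin.last m)) x ∈ B (Fin.last m)
            · rw [Set.indicator_of_mem (show _ ∈ C ∩ B (Fin.last m) from ⟨(hCu ω x).2 hω, hx⟩)]
              simp [hx]
            · rw [Set.indicator_of_notMem (fun h => hx h.2)]
              simp [hx]
          have e2 : ∀ x, p * C.indicator (1 : (∀ i, α i) → ENNReal)
              (Function.update ω (e (Fin.last m)) x) = p := by
            intro x
            simp [Set.indicator, hCu, hω]
          simp only [e1, e2]
          rw [lintegral_indicator_one]
          · simpa using h1 (Fin.last m) ω
          · exact (hB _).preimage (measurable_update ω)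
        · have e1 : ∀ x, (C ∩ B (Fin.last m)).indicator (1 : (∀ i, α i) → ENNReal)
              (Function.update ω (e (Fin.last m)) x) = 0 := by
            intro x
            simp [Set.indicator, hCu, hω]
          simp [e1]
    rw [lintegral_indicator_one (hCm.inter (hB _)), lintegral_const_mul _
      (measurable_one.indicator hCm), lintegral_indicator_one hCm] at key
    calc _ ≤ _ := key
      _ ≤ p * p ^ m := by gcongr
      _ = p ^ (m + 1) := by rw [pow_succ']

/-- Single coordinate version. -/
lemma pi_one_bound {ι : Type*} [Fintype ι] [DecidableEq ι] {α : ι → Type*}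
    [∀ i, MeasurableSpace (α i)]
    (μ : ∀ i, Measure (α i)) [∀ i, IsProbabilityMeasure (μ i)] (p : ENNReal) (i : ι)
    (B : Set (∀ i, α i)) (hB : MeasurableSet B)
    (h : ∀ ω, μ i {x | Function.update ω i x ∈ B} ≤ p) :
    Measure.pi μ B ≤ p := by
  have := pi_seq_bound μ p 1 (fun _ => i) (fun _ => B) (fun _ => hB) (fun _ => h)
    (fun s r hsr => absurd hsr (by simp [Subsingleton.elim s r]))
  rw [Set.iInter_const, pow_one] at this
  exact this

lemma quad_half (a p C κ : ℝ) (ha : 0 < a) (s : Set ℝ)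
    (hs : ∀ y ∈ s, |a * (y - p) ^ 2 + C| ≤ κ)
    (hp : (∀ y ∈ s, p ≤ y) ∨ (∀ y ∈ s, y ≤ p)) :
    volume s ≤ ENNReal.ofReal (Real.sqrt (2 * κ / a)) := by
  refine (Real.volume_le_diam s).trans (Metric.ediam_le fun y hy z hz => ?_)
  rw [edist_dist]
  apply ENNReal.ofReal_le_ofReal
  rw [Real.dist_eq]
  apply Real.le_sqrt_of_sq_le
  rw [sq_abs, le_div_iff₀ ha]
  have h1 := abs_le.1 (hs y hy)
  have h2 := abs_le.1 (hs z hz)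
  have : (y - z) ^ 2 ≤ |(y - p) ^ 2 - (z - p) ^ 2| := by
    rcases hp with hp | hp
    all_goals
      have hy' := hp y hy
      have hz' := hp z hz
      rcases le_total y z with hyz | hyz
    · refine le_trans ?_ (neg_le_abs _); nlinarith
    · refine le_trans ?_ (le_abs_self _); nlinarith
    · refine le_trans ?_ (le_abs_self _); nlinarith
    · refine le_trans ?_ (neg_le_abs _); nlinarith
  have h3 : a * |(y - p) ^ 2 - (z - p) ^ 2| ≤ 2 * κ := by
    nth_rewrite 1 [← abs_of_pos ha]
    rw [← abs_mul, abs_le]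
    constructor <;> linarith
  nlinarith

lemma quad_vol (α β A B C κ b : ℝ) (hα : 0 ≤ α) (hb : 0 < b) (hβ : b ≤ β) (hκ : 0 ≤ κ) :
    volume {y : ℝ | |α * (A - y) ^ 2 + β * (B + y) ^ 2 + C| ≤ κ}
      ≤ ENNReal.ofReal (2 * Real.sqrt (2 * κ / b)) := by
  set a := α + β with ha
  have hapos : 0 < a := by linarith
  set p := (α * A - β * B) / a with hp
  have hpa : a * p = α * A - β * B := by rw [hp]; field_simp
  set C' := α * A ^ 2 + β * B ^ 2 + C - a * p ^ 2 with hC'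
  have hid : ∀ y, α * (A - y) ^ 2 + β * (B + y) ^ 2 + C = a * (y - p) ^ 2 + C' := by
    intro y
    have : a * (y - p) ^ 2 = a * y ^ 2 - 2 * (a * p) * y + a * p ^ 2 := by ring
    rw [this, hpa, hC', ha]; ring
  simp only [hid]
  have hsub : {y : ℝ | |a * (y - p) ^ 2 + C'| ≤ κ} ⊆
      {y : ℝ | |a * (y - p) ^ 2 + C'| ≤ κ ∧ p ≤ y} ∪ {y : ℝ | |a * (y - p) ^ 2 + C'| ≤ κ ∧ y ≤ p} := by
    intro y hy
    rcases le_total p y with h | h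
    · exact Or.inl ⟨hy, h⟩
    · exact Or.inr ⟨hy, h⟩
  refine (measure_mono hsub).trans ((measure_union_le _ _).trans ?_)
  have g1 := quad_half a p C' κ hapos {y : ℝ | |a * (y - p) ^ 2 + C'| ≤ κ ∧ p ≤ y}
    (fun y hy => hy.1) (Or.inl fun y hy => hy.2)
  have g2 := quad_half a p C' κ hapos {y : ℝ | |a * (y - p) ^ 2 + C'| ≤ κ ∧ y ≤ p}
    (fun y hy => hy.1) (Or.inr fun y hy => hy.2)
  refine (add_le_add g1 g2).trans ?_
  rw [← ENNReal.ofReal_add (Real.sqrt_nonneg _) (Real.sqrt_nonneg _), ← two_mul]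
  apply ENNReal.ofReal_le_ofReal
  gcongr
  linarith

lemma gauss_le (y σ : ℝ) (hσ : 0 < σ) (s : Set ℝ) :
    gaussianReal y ((σ ^ 2).toNNReal) s ≤ ENNReal.ofReal (1 / (2 * σ)) * volume s := by
  have hv : ((σ ^ 2).toNNReal) ≠ 0 := by
    simp [hσ.ne']
  rw [gaussianReal_apply y hv]
  calc _ ≤ ∫⁻ x in s, ENNReal.ofReal (1 / (2 * σ)) := by
        apply lintegral_mono
        intro x
        rw [gaussianPDF_def, gaussianPDFReal_def]
        apply ENNReal.ofReal_le_ofReal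
        have h1 : Real.exp (-(x - y) ^ 2 / (2 * ((σ ^ 2).toNNReal : ℝ))) ≤ 1 := by
          apply Real.exp_le_one_iff.2
          apply div_nonpos_of_nonpos_of_nonneg
          · nlinarith [sq_nonneg (x - y)]
          · positivity
        have h2 : 2 * σ ≤ √(2 * Real.pi * ((σ ^ 2).toNNReal : ℝ)) := by
          apply Real.le_sqrt_of_sq_le
          rw [Real.coe_toNNReal _ (sq_nonneg σ)]
          nlinarith [Real.pi_gt_three, sq_nonneg σ]
        have h3 : (√(2 * Real.pi * ((σ ^ 2).toNNReal : ℝ)))⁻¹ ≤ 1 / (2 * σ) := by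
          rw [one_div]; exact inv_anti₀ (by positivity) h2
        calc _ ≤ (1 / (2 * σ)) * 1 := mul_le_mul h3 h1 (Real.exp_nonneg _) (by positivity)
          _ = _ := mul_one _
    _ = _ := by simp

lemma gauss_box (y σ D : ℝ) (hy : y ∈ Set.Icc (0 : ℝ) 1) (hσ : 0 < σ) (hσ1 : σ ≤ 1) (hD : 6 ≤ D) :
    2⁻¹ ≤ gaussianReal y ((σ ^ 2).toNNReal) (Set.Icc (-(D / 2)) (D / 2)) := by
  have hch := meas_ge_le_variance_div_sq (X := id) (μ := gaussianReal y ((σ ^ 2).toNNReal))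
    (by exact_mod_cast memLp_id_gaussianReal 2) (c := 2) (by norm_num)
  rw [variance_id_gaussianReal] at hch
  simp only [id, integral_id_gaussianReal] at hch
  have hle : ENNReal.ofReal (((σ ^ 2).toNNReal : ℝ) / 2 ^ 2) ≤ 2⁻¹ := by
    rw [Real.coe_toNNReal _ (sq_nonneg σ)]
    have : (2⁻¹ : ENNReal) = ENNReal.ofReal (1 / 2) := by
      rw [one_div, ENNReal.ofReal_inv_of_pos (by norm_num)]; simp
    rw [this]
    apply ENNReal.ofReal_le_ofReal
    nlinarith
  have hcompl : (Set.Icc (-(D / 2)) (D / 2))ᶜ ⊆ {ω : ℝ | 2 ≤ |ω - y|} := by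
    intro x hx
    by_contra hcon
    simp only [Set.mem_ofPred_eq, not_le, abs_lt] at hcon
    apply hx
    constructor <;> linarith [hy.1, hy.2]
  have h1 : gaussianReal y ((σ ^ 2).toNNReal) (Set.Icc (-(D / 2)) (D / 2))ᶜ ≤ 2⁻¹ :=
    (measure_mono hcompl).trans (hch.trans hle)
  have h2 := prob_add_prob_compl (μ := gaussianReal y ((σ ^ 2).toNNReal))
    (measurableSet_Icc (a := -(D / 2)) (b := D / 2))
  by_contra hcon
  push Not at hcon
  have : (1 : ENNReal) < 1 := by
    calc (1 : ENNReal) = _ := h2.symm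
      _ < 2⁻¹ + 2⁻¹ := ENNReal.add_lt_add_of_lt_of_le (ne_top_of_le_ne_top (by simp) h1) hcon h1
      _ = 1 := ENNReal.inv_two_add_inv_two
  exact lt_irrefl _ this

lemma condgauss_le (y σ D : ℝ) (hy : y ∈ Set.Icc (0 : ℝ) 1) (hσ : 0 < σ) (hσ1 : σ ≤ 1)
    (hD : 6 ≤ D) (s : Set ℝ) :
    ProbabilityTheory.cond (gaussianReal y ((σ ^ 2).toNNReal)) (Set.Icc (-(D / 2)) (D / 2)) s
      ≤ ENNReal.ofReal (1 / σ) * volume s := by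
  rw [cond_apply measurableSet_Icc]
  calc _ ≤ 2 * (ENNReal.ofReal (1 / (2 * σ)) * volume s) := by
        gcongr
        · rw [ENNReal.inv_le_iff_inv_le]; exact gauss_box y σ D hy hσ hσ1 hD
        · exact (measure_mono Set.inter_subset_right).trans (gauss_le y σ hσ s)
    _ = _ := by
        rw [← mul_assoc]
        congr 1
        rw [show (2 : ENNReal) = ENNReal.ofReal 2 by simp, ← ENNReal.ofReal_mul (by norm_num)]
        congr 1
        field_simp

/-- Cluster sum computed from an initial sum and the labels of the active points. -/
noncomputable def Tsum {n k d m : ℕ} (e : Fin m → Fin n) (l0 g : Fin m → Fin k)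
    (U : Fin k → Fin d → ℝ) (i : Fin k) (ω : Fin n → Fin d → ℝ) (c : Fin d) : ℝ :=
  U i c + ∑ r, ((if g r = i then (1 : ℝ) else 0) - (if l0 r = i then 1 else 0)) * ω (e r) c

/-- Cluster size computed from an initial size and the labels of the active points. -/
noncomputable def Msum {k m : ℕ} (l0 g : Fin m → Fin k) (N : Fin k → ℝ) (i : Fin k) : ℝ :=
  N i + ∑ r, ((if g r = i then (1 : ℝ) else 0) - (if l0 r = i then 1 else 0))

/-- Squared norm divided by the size. -/
noncomputable def HH {d : ℕ} (T : Fin d → ℝ) (M : ℝ) : ℝ := M⁻¹ * ∑ c, T c ^ 2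

/-- Labels of the active points just after the first move of the `s`-th active point. -/
def lka {k m : ℕ} (l0 : Fin m → Fin k) (lab : (s : Fin m) → {r : Fin m // r ≤ s} → Fin k)
    (s r : Fin m) : Fin k := if h : r ≤ s then lab s ⟨r, h⟩ else l0 r

/-- Labels of the active points just before the first move of the `s`-th active point. -/
def lkb {k m : ℕ} (l0 : Fin m → Fin k) (lab : (s : Fin m) → {r : Fin m // r ≤ s} → Fin k)
    (s r : Fin m) : Fin k := if h : r < s then lab s ⟨r, h.le⟩ else l0 r

/-- The (approximate) gain of the first move of the `s`-th active point. -/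
noncomputable def gain {n k d m : ℕ} (e : Fin m → Fin n) (l0 : Fin m → Fin k)
    (lab : (s : Fin m) → {r : Fin m // r ≤ s} → Fin k)
    (N : Fin k → ℝ) (U : Fin k → Fin d → ℝ) (s : Fin m) (ω : Fin n → Fin d → ℝ) : ℝ :=
  HH (Tsum e l0 (lka l0 lab s) U (l0 s) ω) (Msum l0 (lka l0 lab s) N (l0 s))
  + HH (Tsum e l0 (lka l0 lab s) U (lka l0 lab s s) ω) (Msum l0 (lka l0 lab s) N (lka l0 lab s s))
  - HH (Tsum e l0 (lkb l0 lab s) U (l0 s) ω) (Msum l0 (lkb l0 lab s) N (l0 s))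
  - HH (Tsum e l0 (lkb l0 lab s) U (lka l0 lab s s) ω) (Msum l0 (lkb l0 lab s) N (lka l0 lab s s))

lemma Tsum_update {n k d m : ℕ} (e : Fin m → Fin n) (he : Function.Injective e)
    (l0 g : Fin m → Fin k)
    (U : Fin k → Fin d → ℝ) (i : Fin k) (ω : Fin n → Fin d → ℝ) (c : Fin d) (q : Fin m)
    (x : Fin d → ℝ) :
    Tsum e l0 g U i (Function.update ω (e q) x) c = Tsum e l0 g U i ω c
      + ((if g q = i then (1 : ℝ) else 0) - (if l0 q = i then 1 else 0)) * (x c - ω (e q) c) := by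
  unfold Tsum
  have : ∀ r, ((if g r = i then (1 : ℝ) else 0) - (if l0 r = i then 1 else 0))
        * Function.update ω (e q) x (e r) c
      = ((if g r = i then (1 : ℝ) else 0) - (if l0 r = i then 1 else 0)) * ω (e r) c
        + if r = q then ((if g q = i then (1 : ℝ) else 0) - (if l0 q = i then 1 else 0))
          * (x c - ω (e q) c) else 0 := by
    intro r
    by_cases h : r = q
    · subst h
      simp only [Function.update_self, if_true]
      ring
    · rw [Function.update_of_ne (fun h' => h (he h')), if_neg h, add_zero]
  simp only [this, Finset.sum_add_distrib, Finset.sum_ite_eq', Finset.mem_univ, if_true]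
  ring

lemma sum_upd {d : ℕ} (c0 : Fin d) (x : Fin d → ℝ) (y : ℝ) (f : Fin d → ℝ → ℝ) :
    ∑ c, f c (Function.update x c0 y c) = f c0 y + ∑ c ∈ Finset.univ.erase c0, f c (x c) := by
  rw [← Finset.add_sum_erase _ _ (Finset.mem_univ c0), Function.update_self]
  congr 1
  refine Finset.sum_congr rfl fun c hc => ?_
  rw [Function.update_of_ne (Finset.ne_of_mem_erase hc)]

lemma gain_measurable {n k d m : ℕ} (e : Fin m → Fin n) (l0 : Fin m → Fin k)
    (lab : (s : Fin m) → {r : Fin m // r ≤ s} → Fin k)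
    (N : Fin k → ℝ) (U : Fin k → Fin d → ℝ) (s : Fin m) :
    Measurable (gain e l0 lab N U s) := by
  unfold gain HH Tsum
  fun_prop

lemma gain_update_gt {n k d m : ℕ} (e : Fin m → Fin n) (he : Function.Injective e)
    (l0 : Fin m → Fin k)
    (lab : (s : Fin m) → {r : Fin m // r ≤ s} → Fin k)
    (N : Fin k → ℝ) (U : Fin k → Fin d → ℝ) (s q : Fin m) (hsq : s < q)
    (ω : Fin n → Fin d → ℝ) (x : Fin d → ℝ) :
    gain e l0 lab N U s (Function.update ω (e q) x) = gain e l0 lab N U s ω := by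
  have ha : lka l0 lab s q = l0 q := by simp [lka, hsq]
  have hb : lkb l0 lab s q = l0 q := by simp [lkb, hsq.le]
  have h1 : ∀ i, Tsum e l0 (lka l0 lab s) U i (Function.update ω (e q) x)
      = Tsum e l0 (lka l0 lab s) U i ω := by
    intro i; funext c; rw [Tsum_update e he, ha]; ring
  have h2 : ∀ i, Tsum e l0 (lkb l0 lab s) U i (Function.update ω (e q) x)
      = Tsum e l0 (lkb l0 lab s) U i ω := by
    intro i; funext c; rw [Tsum_update e he, hb]; ring
  simp only [gain, h1, h2]

lemma gain_update_self {n k d m : ℕ} (e : Fin m → Fin n) (he : Function.Injective e)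
    (l0 : Fin m → Fin k)
    (lab : (s : Fin m) → {r : Fin m // r ≤ s} → Fin k)
    (N : Fin k → ℝ) (U : Fin k → Fin d → ℝ) (s : Fin m) (hij : l0 s ≠ lka l0 lab s s)
    (ω : Fin n → Fin d → ℝ) (x : Fin d → ℝ) (c0 : Fin d) :
    ∃ A B C : ℝ, ∀ y, gain e l0 lab N U s (Function.update ω (e s) (Function.update x c0 y)) =
      (Msum l0 (lka l0 lab s) N (l0 s))⁻¹ * (A - y) ^ 2
      + (Msum l0 (lka l0 lab s) N (lka l0 lab s s))⁻¹ * (B + y) ^ 2 + C := by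
  have hb : lkb l0 lab s s = l0 s := by simp [lkb]
  set i := l0 s with hi
  set j := lka l0 lab s s with hj
  have h1 : ∀ x, Tsum e l0 (lka l0 lab s) U i (Function.update ω (e s) x)
      = fun c => (Tsum e l0 (lka l0 lab s) U i ω c + ω (e s) c) - x c := by
    intro x; funext c; rw [Tsum_update e he, ← hj, ← hi, if_neg hij.symm, if_pos rfl]; ring
  have h2 : ∀ x, Tsum e l0 (lka l0 lab s) U j (Function.update ω (e s) x)
      = fun c => (Tsum e l0 (lka l0 lab s) U j ω c - ω (e s) c) + x c := by
    intro x; funext c; rw [Tsum_update e he, ← hj, ← hi, if_neg hij, if_pos rfl]; ring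
  have h3 : ∀ i x, Tsum e l0 (lkb l0 lab s) U i (Function.update ω (e s) x)
      = Tsum e l0 (lkb l0 lab s) U i ω := by
    intro i x; funext c; rw [Tsum_update e he, hb]; ring
  have h4 := fun y => sum_upd c0 x y
    (fun c z => ((Tsum e l0 (lka l0 lab s) U i ω c + ω (e s) c) - z) ^ 2)
  have h5 := fun y => sum_upd c0 x y
    (fun c z => ((Tsum e l0 (lka l0 lab s) U j ω c - ω (e s) c) + z) ^ 2)
  refine ⟨Tsum e l0 (lka l0 lab s) U i ω c0 + ω (e s) c0,
    Tsum e l0 (lka l0 lab s) U j ω c0 - ω (e s) c0,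
    (Msum l0 (lka l0 lab s) N i)⁻¹ * ∑ c ∈ Finset.univ.erase c0,
      ((Tsum e l0 (lka l0 lab s) U i ω c + ω (e s) c) - x c) ^ 2
    + (Msum l0 (lka l0 lab s) N j)⁻¹ * ∑ c ∈ Finset.univ.erase c0,
      ((Tsum e l0 (lka l0 lab s) U j ω c - ω (e s) c) + x c) ^ 2
    - HH (Tsum e l0 (lkb l0 lab s) U i ω) (Msum l0 (lkb l0 lab s) N i)
    - HH (Tsum e l0 (lkb l0 lab s) U j ω) (Msum l0 (lkb l0 lab s) N j), fun y => ?_⟩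
  rw [gain, ← hi, ← hj, h1, h2, h3, h3]
  simp only [HH] at *
  rw [h4, h5]
  ring

lemma gain_prob {n k d m : ℕ} (hn : 0 < n) (hd : 0 < d)
    (ρ : Fin n → Fin d → Measure ℝ)
    [∀ i j, IsProbabilityMeasure (ρ i j)] (K : ℝ)
    (hρ : ∀ i j S, ρ i j S ≤ ENNReal.ofReal K * volume S)
    (e : Fin m → Fin n) (he : Function.Injective e) (l0 : Fin m → Fin k)
    (lab : (s : Fin m) → {r : Fin m // r ≤ s} → Fin k)
    (N : Fin k → ℝ) (U : Fin k → Fin d → ℝ)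
    (hij : ∀ s, l0 s ≠ lka l0 lab s s)
    (hMi : ∀ s, 0 ≤ Msum l0 (lka l0 lab s) N (l0 s))
    (hMj : ∀ s, 1 ≤ Msum l0 (lka l0 lab s) N (lka l0 lab s s))
    (hMj' : ∀ s, Msum l0 (lka l0 lab s) N (lka l0 lab s s) ≤ n)
    (κ : ℝ) (hκ : 0 ≤ κ) :
    Measure.pi (fun i => Measure.pi (fun j => ρ i j)) {ω | ∀ s, |gain e l0 lab N U s ω| ≤ κ}
      ≤ (ENNReal.ofReal K * ENNReal.ofReal (2 * Real.sqrt (2 * κ * n))) ^ m := by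
  have hmeas : ∀ s, MeasurableSet {ω : Fin n → Fin d → ℝ | |gain e l0 lab N U s ω| ≤ κ} :=
    fun s => measurableSet_le ((gain_measurable e l0 lab N U s).norm) measurable_const
  have hset : {ω : Fin n → Fin d → ℝ | ∀ s, |gain e l0 lab N U s ω| ≤ κ}
      = ⋂ s, {ω | |gain e l0 lab N U s ω| ≤ κ} := by
    ext ω; simp
  rw [hset]
  refine pi_seq_bound _ _ m e _ hmeas ?_ ?_
  · intro s ω
    refine pi_one_bound _ _ ⟨0, hd⟩ _ ((hmeas s).preimage (measurable_update ω)) ?_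
    intro x
    refine (hρ _ _ _).trans ?_
    gcongr
    obtain ⟨A, B, C, hABC⟩ := gain_update_self e he l0 lab N U s (hij s) ω x ⟨0, hd⟩
    have hnpos : (0 : ℝ) < n := by exact_mod_cast hn
    have := quad_vol (Msum l0 (lka l0 lab s) N (l0 s))⁻¹
      (Msum l0 (lka l0 lab s) N (lka l0 lab s s))⁻¹ A B C κ (n : ℝ)⁻¹
      (inv_nonneg.2 (hMi s)) (by positivity)
      (inv_anti₀ (by linarith [hMj s]) (hMj' s)) hκ
    rw [div_inv_eq_mul] at this
    refine le_trans (le_of_eq ?_) this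
    congr 1
    ext y
    simp only [Set.mem_ofPred_eq]
    rw [hABC y]
  · intro s r hsr ω x
    simp only [Set.mem_ofPred_eq]
    rw [gain_update_gt e he l0 lab N U s r hsr ω x]

lemma exists_times {n k m : ℕ} (L : ℕ) (seq : ℕ → Fin n → Fin k)
    (hstep : ∀ t < L, SingleMove (seq t) (seq (t + 1)))
    (hcard : {x : Fin n | ∃ t < L, seq (t + 1) x ≠ seq t x}.ncard = m) :
    ∃ (e : Fin m → Fin n) (t : Fin m → ℕ), StrictMono t ∧ Function.Injective e ∧
      (∀ s, t s < L) ∧ (∀ s, seq (t s + 1) (e s) ≠ seq (t s) (e s)) ∧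
      (∀ s, ∀ t' ≤ t s, seq t' (e s) = seq 0 (e s)) ∧
      (∀ x, x ∉ Set.range e → ∀ t' ≤ L, seq t' x = seq 0 x) := by
  classical
  set A : Finset (Fin n) := Finset.univ.filter fun x => ∃ t < L, seq (t + 1) x ≠ seq t x with hA
  have hAc : A.card = m := by
    rw [← hcard, ← Set.ncard_coe_finset]
    congr 1
    ext x; simp [hA]
  have hmove : ∀ t < L, ∀ x y, seq (t + 1) x ≠ seq t x → seq (t + 1) y ≠ seq t y → x = y := by
    intro t ht x y hx hy
    obtain ⟨j, _, hj⟩ := hstep t ht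
    have h1 : x = j := by by_contra h; exact hx (hj x h)
    have h2 : y = j := by by_contra h; exact hy (hj y h)
    rw [h1, h2]
  have hex : ∀ x ∈ A, ∃ t, t < L ∧ seq (t + 1) x ≠ seq t x ∧ ∀ t' ≤ t, seq t' x = seq 0 x := by
    intro x hx
    have hx' : ∃ t, t < L ∧ seq (t + 1) x ≠ seq t x := by simpa [hA] using hx
    refine ⟨Nat.find hx', (Nat.find_spec hx').1, (Nat.find_spec hx').2, ?_⟩
    intro t'
    induction t' with
    | zero => intro _; rfl
    | succ u ih =>
      intro hu
      have hlt : u < Nat.find hx' := hu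
      have := Nat.find_min hx' hlt
      push Not at this
      rw [this (hlt.trans (Nat.find_spec hx').1), ih hlt.le]
  choose! τ hτL hτne hτ0 using hex
  have hinj : Set.InjOn τ A := by
    intro x hx y hy hxy
    have h1 := hτne x hx
    have h2 := hτne y hy
    rw [← hxy] at h2
    exact hmove _ (hτL x hx) x y h1 h2
  have hIc : (A.image τ).card = m := by rw [Finset.card_image_of_injOn hinj, hAc]
  set t := (A.image τ).orderEmbOfFin hIc with ht
  have hts : ∀ s, ∃ x ∈ A, τ x = t s := by
    intro s
    exact Finset.mem_image.1 (Finset.orderEmbOfFin_mem (A.image τ) hIc s)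
  choose e heA het using hts
  refine ⟨e, t, t.strictMono, ?_, ?_, ?_, ?_, ?_⟩
  · intro a b hab
    apply t.injective
    rw [← het a, ← het b, hab]
  · intro s; rw [← het s]; exact hτL _ (heA s)
  · intro s; rw [← het s]; exact hτne _ (heA s)
  · intro s; rw [← het s]; exact hτ0 _ (heA s)
  · intro x hx
    have hxA : x ∉ A := by
      intro hxA
      apply hx
      have h1 : τ x ∈ A.image τ := Finset.mem_image_of_mem _ hxA
      have h2 : τ x ∈ Set.range t := by
        rw [ht, Finset.range_orderEmbOfFin]; exact h1
      obtain ⟨s, hs⟩ := h2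
      exact ⟨s, hinj (heA s) hxA (by rw [het s, hs])⟩
    have hx' : ∀ t < L, seq (t + 1) x = seq t x := by
      intro t ht
      by_contra h
      exact hxA (by simp only [hA, Finset.mem_filter, Finset.mem_univ, true_and]; exact ⟨t, ht, h⟩)
    intro t'
    induction t' with
    | zero => intro _; rfl
    | succ u ih => intro hu; rw [hx' u hu, ih (by omega)]

lemma clsum_change {n k m : ℕ} (e : Fin m → Fin n) (he : Function.Injective e)
    (cl cl0 : Fin n → Fin k) (h : ∀ x, x ∉ Set.range e → cl x = cl0 x) (f : Fin n → ℝ) (i : Fin k) :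
    ∑ j ∈ clusterIdx cl i, f j = ∑ j ∈ clusterIdx cl0 i, f j
      + ∑ r, ((if cl (e r) = i then (1 : ℝ) else 0) - (if cl0 (e r) = i then 1 else 0))
        * f (e r) := by
  have h1 : ∀ c : Fin n → Fin k, ∑ j ∈ clusterIdx c i, f j
      = ∑ j, (if c j = i then (1 : ℝ) else 0) * f j := by
    intro c
    rw [clusterIdx, Finset.sum_filter]
    refine Finset.sum_congr rfl fun j _ => ?_
    split_ifs <;> simp
  rw [h1, h1, ← sub_eq_iff_eq_add', ← Finset.sum_sub_distrib]
  symm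
  refine (Finset.sum_map Finset.univ ⟨e, he⟩ (fun j => ((if cl j = i then (1 : ℝ) else 0)
    - (if cl0 j = i then 1 else 0)) * f j)).symm.trans ?_
  rw [Finset.sum_subset (Finset.subset_univ _)]
  · refine Finset.sum_congr rfl fun j _ => ?_
    ring
  · intro x _ hx
    rw [h x (by simpa using hx)]
    simp

lemma pot_formula {n k d : ℕ} (ω : Fin n → Fin d → ℝ) (cl : Fin n → Fin k) :
    kmeansPot (fun i => toEuc (ω i)) cl = ∑ j, ∑ c, ω j c ^ 2
      - ∑ i, HH (fun c => ∑ j ∈ clusterIdx cl i, ω j c) ((clusterIdx cl i).card : ℝ) := by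
  have hcl : ∀ i, ∑ j ∈ clusterIdx cl i, ‖toEuc (ω j) - clusterCtr (fun i => toEuc (ω i)) cl i‖ ^ 2
      = ∑ j ∈ clusterIdx cl i, ∑ c, ω j c ^ 2
        - HH (fun c => ∑ j ∈ clusterIdx cl i, ω j c) ((clusterIdx cl i).card : ℝ) := by
    intro i
    have hn : ∀ j, ‖toEuc (ω j) - clusterCtr (fun i => toEuc (ω i)) cl i‖ ^ 2
        = ∑ c, (ω j c - ((clusterIdx cl i).card : ℝ)⁻¹ * ∑ j ∈ clusterIdx cl i, ω j c) ^ 2 := by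
      intro j
      rw [EuclideanSpace.real_norm_sq_eq]
      refine Finset.sum_congr rfl fun c _ => ?_
      simp [toEuc, clusterCtr]
    simp only [hn]
    rw [Finset.sum_comm, Finset.sum_comm (s := clusterIdx cl i), HH, Finset.mul_sum,
      ← Finset.sum_sub_distrib]
    refine Finset.sum_congr rfl fun c _ => ?_
    set S := ∑ j ∈ clusterIdx cl i, ω j c with hS
    rcases Nat.eq_zero_or_pos (clusterIdx cl i).card with h0 | h0
    · have : clusterIdx cl i = ∅ := Finset.card_eq_zero.1 h0
      simp [this]
    · have hM : ((clusterIdx cl i).card : ℝ) ≠ 0 := by positivity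
      simp only [sub_sq, Finset.sum_add_distrib, Finset.sum_sub_distrib, Finset.sum_const,
        nsmul_eq_mul, ← Finset.sum_mul, ← Finset.mul_sum]
      rw [← hS]
      field_simp
      ring
  unfold kmeansPot
  simp only [hcl, Finset.sum_sub_distrib]
  congr 1
  unfold clusterIdx
  exact Finset.sum_fiberwise _ _ _

lemma pot_diff {n k d : ℕ} (ω : Fin n → Fin d → ℝ) (cl cl' : Fin n → Fin k) (x : Fin n)
    (hx : cl x ≠ cl' x) (h : ∀ y, y ≠ x → cl' y = cl y) :
    kmeansPot (fun i => toEuc (ω i)) cl - kmeansPot (fun i => toEuc (ω i)) cl' =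
      HH (fun c => ∑ j ∈ clusterIdx cl' (cl x), ω j c) ((clusterIdx cl' (cl x)).card : ℝ)
      + HH (fun c => ∑ j ∈ clusterIdx cl' (cl' x), ω j c) ((clusterIdx cl' (cl' x)).card : ℝ)
      - HH (fun c => ∑ j ∈ clusterIdx cl (cl x), ω j c) ((clusterIdx cl (cl x)).card : ℝ)
      - HH (fun c => ∑ j ∈ clusterIdx cl (cl' x), ω j c) ((clusterIdx cl (cl' x)).card : ℝ) := by
  rw [pot_formula, pot_formula]
  set F : (Fin n → Fin k) → Fin k → ℝ := fun cl i =>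
    HH (fun c => ∑ j ∈ clusterIdx cl i, ω j c) ((clusterIdx cl i).card : ℝ) with hF
  have hsame : ∀ i, i ≠ cl x → i ≠ cl' x → F cl' i = F cl i := by
    intro i h1 h2
    have : clusterIdx cl' i = clusterIdx cl i := by
      ext y
      simp only [clusterIdx, Finset.mem_filter, Finset.mem_univ, true_and]
      by_cases hy : y = x
      · subst hy; exact ⟨fun h => absurd h.symm h2, fun h => absurd h.symm h1⟩
      · rw [h y hy]
    simp only [hF, this]
  have hsum : ∑ i, (F cl' i - F cl i) = (F cl' (cl x) - F cl (cl x))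
      + (F cl' (cl' x) - F cl (cl' x)) := by
    rw [← Finset.sum_pair (f := fun i => F cl' i - F cl i) hx]
    symm
    apply Finset.sum_subset (Finset.subset_univ _)
    intro i _ hi
    simp only [Finset.mem_insert, Finset.mem_singleton, not_or] at hi
    rw [hsame i hi.1 hi.2, sub_self]
  rw [Finset.sum_sub_distrib] at hsum
  change (_ - ∑ i, F cl i) - (_ - ∑ i, F cl' i) = F cl' (cl x) + F cl' (cl' x) - F cl (cl x)
    - F cl (cl' x)
  linarith

lemma HH_close {d : ℕ} (T T' : Fin d → ℝ) (M : ℕ) (D ε : ℝ) (hD : 0 ≤ D) (hε : 0 < ε) (hε1 : ε ≤ 1)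
    (hT : ∀ c, |T c| ≤ M * (D / 2)) (hT' : ∀ c, |T' c - T c| ≤ ε) :
    |HH T' M - HH T M| ≤ d * ((D + 1) * ε) := by
  rcases Nat.eq_zero_or_pos M with h0 | h0
  · subst h0
    simp only [HH, Nat.cast_zero, inv_zero, zero_mul, sub_self, abs_zero]
    positivity
  have hM : (1 : ℝ) ≤ M := by exact_mod_cast h0
  rw [HH, HH, ← mul_sub, ← Finset.sum_sub_distrib, abs_mul, abs_of_nonneg (by positivity),
    inv_mul_le_iff₀ (by positivity)]
  calc |∑ c, (T' c ^ 2 - T c ^ 2)| ≤ ∑ c, |T' c ^ 2 - T c ^ 2| := Finset.abs_sum_le_sum_abs _ _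
    _ ≤ ∑ c : Fin d, M * ((D + 1) * ε) := by
        refine Finset.sum_le_sum fun c _ => ?_
        have h1 : T' c ^ 2 - T c ^ 2 = (T' c - T c) * (2 * T c + (T' c - T c)) := by ring
        rw [h1, abs_mul]
        have h2 : |2 * T c + (T' c - T c)| ≤ M * (D + 1) := by
          have h3 := abs_le.1 (hT c)
          have h4 := abs_le.1 (hT' c)
          rw [abs_le]
          constructor <;> nlinarith
        calc _ ≤ ε * (M * (D + 1)) := by
              apply mul_le_mul (hT' c) h2 (abs_nonneg _) hε.le
          _ = _ := by ring
    _ = _ := by simp; ring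

lemma exists_data {n k d m : ℕ} (hd : 0 < d) (D ε : ℝ) (hD : 6 ≤ D) (hε : 0 < ε) (hε1 : ε ≤ 1)
    (ω : Fin n → Fin d → ℝ) (hω : ∀ i j, |ω i j| ≤ D / 2)
    (L : ℕ) (seq : ℕ → Fin n → Fin k)
    (hstep : ∀ t < L, SingleMove (seq t) (seq (t + 1)) ∧
      kmeansPot (fun i => toEuc (ω i)) (seq (t + 1)) < kmeansPot (fun i => toEuc (ω i)) (seq t))
    (hcard : {x : Fin n | ∃ t < L, seq (t + 1) x ≠ seq t x}.ncard = m)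
    (himp : kmeansPot (fun i => toEuc (ω i)) (seq 0)
      - kmeansPot (fun i => toEuc (ω i)) (seq L) ≤ ε) :
    ∃ (e : Fin m → Fin n) (l0 : Fin m → Fin k)
      (lab : (s : Fin m) → {r : Fin m // r ≤ s} → Fin k)
      (N : Fin k → Fin (n + 1)) (g : Fin k → Fin d → Fin (⌊n * D / ε⌋₊ + 1)),
      (Function.Injective e ∧ (∀ s, l0 s ≠ lka l0 lab s s) ∧
      (∀ s, 0 ≤ Msum l0 (lka l0 lab s) (fun i => ((N i : ℕ) : ℝ)) (l0 s)) ∧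
      (∀ s, 1 ≤ Msum l0 (lka l0 lab s) (fun i => ((N i : ℕ) : ℝ)) (lka l0 lab s s)) ∧
      (∀ s, Msum l0 (lka l0 lab s) (fun i => ((N i : ℕ) : ℝ)) (lka l0 lab s s) ≤ n)) ∧
      ∀ s, |gain e l0 lab (fun i => ((N i : ℕ) : ℝ))
        (fun i c => -(n * (D / 2)) + ((g i c : ℕ) : ℝ) * ε) s ω| ≤ 5 * d * D * ε := by
  obtain ⟨e, t, htm, he, htL, hne, h0, hout⟩ := exists_times L seq (fun t ht => (hstep t ht).1) hcard
  have hmove : ∀ s y, y ≠ e s → seq (t s + 1) y = seq (t s) y := by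
    intro s y hy
    obtain ⟨j, _, hj⟩ := (hstep (t s) (htL s)).1
    have h1 : e s = j := by by_contra h; exact hne s (hj _ h)
    exact hj y (h1 ▸ hy)
  set l0 : Fin m → Fin k := fun r => seq 0 (e r) with hl0
  set lab : (s : Fin m) → {r : Fin m // r ≤ s} → Fin k := fun s r => seq (t s + 1) (e r.1) with hlab
  have hka : ∀ s r, lka l0 lab s r = seq (t s + 1) (e r) := by
    intro s r
    unfold lka
    split_ifs with h
    · rfl
    · exact (h0 r _ (htm (not_le.1 h))).symm
  have hkb : ∀ s r, lkb l0 lab s r = seq (t s) (e r) := by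
    intro s r
    unfold lkb
    split_ifs with h
    · exact hmove s _ (fun h' => h.ne (he h'))
    · exact (h0 r _ (htm.monotone (not_lt.1 h))).symm
  set U0 : Fin k → Fin d → ℝ := fun i c => ∑ j ∈ clusterIdx (seq 0) i, ω j c with hU0
  have hcardn : ∀ (cl : Fin n → Fin k) i, (clusterIdx cl i).card ≤ n := by
    intro cl i
    simpa using Finset.card_le_univ (clusterIdx cl i)
  set N : Fin k → Fin (n + 1) := fun i =>
    ⟨(clusterIdx (seq 0) i).card, Nat.lt_succ_of_le (hcardn _ _)⟩ with hN
  have hact : ∀ (cl : Fin n → Fin k) i c, |∑ j ∈ clusterIdx cl i, ω j c|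
      ≤ (clusterIdx cl i).card * (D / 2) := by
    intro cl i c
    refine (Finset.abs_sum_le_sum_abs _ _).trans ?_
    refine (Finset.sum_le_card_nsmul _ _ (D / 2) (fun j _ => hω j c)).trans ?_
    simp
  have hU0b : ∀ i c, |U0 i c| ≤ n * (D / 2) := by
    intro i c
    refine (hact _ _ _).trans ?_
    have : ((clusterIdx (seq 0) i).card : ℝ) ≤ n := by exact_mod_cast hcardn _ _
    gcongr
  have hgle : ∀ i c, ⌊(U0 i c + n * (D / 2)) / ε⌋₊ < ⌊n * D / ε⌋₊ + 1 := by
    intro i c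
    apply Nat.lt_succ_of_le
    apply Nat.floor_le_floor
    have := (abs_le.1 (hU0b i c)).2
    gcongr
    linarith
  set g : Fin k → Fin d → Fin (⌊n * D / ε⌋₊ + 1) := fun i c => ⟨_, hgle i c⟩ with hg
  set U : Fin k → Fin d → ℝ := fun i c => -(n * (D / 2)) + ((g i c : ℕ) : ℝ) * ε with hU
  have hUU0 : ∀ i c, |U i c - U0 i c| ≤ ε := by
    intro i c
    have hnn : 0 ≤ (U0 i c + n * (D / 2)) / ε := by
      apply div_nonneg _ hε.le
      linarith [(abs_le.1 (hU0b i c)).1]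
    have h1 := Nat.floor_le hnn
    have h2 := Nat.lt_floor_add_one ((U0 i c + n * (D / 2)) / ε)
    have h3 : (U0 i c + n * (D / 2)) / ε * ε = U0 i c + n * (D / 2) := by field_simp
    have h1' := mul_le_mul_of_nonneg_right h1 hε.le
    have h2' := mul_lt_mul_of_pos_right h2 hε
    rw [h3] at h1' h2'
    rw [abs_le]
    simp only [hU, hg]
    constructor <;> linarith
  have hM : ∀ u ≤ L, ∀ gg : Fin m → Fin k, (∀ r, gg r = seq u (e r)) → ∀ i,
      Msum l0 gg (fun i => ((N i : ℕ) : ℝ)) i = (clusterIdx (seq u) i).card := by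
    intro u hu gg hgg i
    have := clsum_change e he (seq u) (seq 0) (fun x hx => hout x hx u hu) (fun _ => (1 : ℝ)) i
    simp only [Finset.sum_const, nsmul_eq_mul, mul_one] at this
    rw [this, Msum]
    simp only [hgg, hl0, hN]
  have hT : ∀ u ≤ L, ∀ gg : Fin m → Fin k, (∀ r, gg r = seq u (e r)) → ∀ i c,
      |Tsum e l0 gg U i ω c - ∑ j ∈ clusterIdx (seq u) i, ω j c| ≤ ε := by
    intro u hu gg hgg i c
    have := clsum_change e he (seq u) (seq 0) (fun x hx => hout x hx u hu) (fun j => ω j c) i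
    rw [this, Tsum]
    simp only [hgg, hl0]
    refine le_trans (le_of_eq ?_) (hUU0 i c)
    congr 1
    simp only [hU0]
    ring
  have hH : ∀ u ≤ L, ∀ gg : Fin m → Fin k, (∀ r, gg r = seq u (e r)) → ∀ i,
      |HH (Tsum e l0 gg U i ω) (Msum l0 gg (fun i => ((N i : ℕ) : ℝ)) i)
        - HH (fun c => ∑ j ∈ clusterIdx (seq u) i, ω j c) ((clusterIdx (seq u) i).card : ℝ)|
        ≤ d * ((D + 1) * ε) := by
    intro u hu gg hgg i
    rw [hM u hu gg hgg i]
    exact HH_close _ _ _ D ε (by linarith) hε hε1 (hact _ _) (hT u hu gg hgg i)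
  have hmono : ∀ u v, u ≤ v → v ≤ L → kmeansPot (fun i => toEuc (ω i)) (seq v)
      ≤ kmeansPot (fun i => toEuc (ω i)) (seq u) := by
    intro u v huv
    induction v, huv using Nat.le_induction with
    | base => intro _; exact le_rfl
    | succ v _ ih => intro hv; exact ((hstep v hv).2.le).trans (ih (by omega))
  refine ⟨e, l0, lab, N, g, ⟨he, ?_, ?_, ?_, ?_⟩, ?_⟩
  · intro s
    rw [hka]
    simp only [hl0]
    rw [← h0 s (t s) le_rfl]
    exact (hne s).symm
  · intro s
    rw [hM (t s + 1) (htL s) _ (hka s)]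
    positivity
  · intro s
    rw [hM (t s + 1) (htL s) _ (hka s), hka]
    have : 0 < (clusterIdx (seq (t s + 1)) (seq (t s + 1) (e s))).card :=
      Finset.card_pos.2 ⟨e s, by simp [clusterIdx]⟩
    exact_mod_cast this
  · intro s
    rw [hM (t s + 1) (htL s) _ (hka s)]
    exact_mod_cast hcardn _ _
  · intro s
    have hi : l0 s = seq (t s) (e s) := (h0 s (t s) le_rfl).symm
    have hj : lka l0 lab s s = seq (t s + 1) (e s) := hka s s
    have hdiff := pot_diff ω (seq (t s)) (seq (t s + 1)) (e s) (hne s).symm (hmove s)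
    rw [← hi, ← hj] at hdiff
    have a1 := abs_le.1 (hH (t s + 1) (htL s) _ (hka s) (l0 s))
    have a2 := abs_le.1 (hH (t s + 1) (htL s) _ (hka s) (lka l0 lab s s))
    have a3 := abs_le.1 (hH (t s) (htL s).le _ (hkb s) (l0 s))
    have a4 := abs_le.1 (hH (t s) (htL s).le _ (hkb s) (lka l0 lab s s))
    have b1 := (hstep (t s) (htL s)).2
    have b2 := hmono 0 (t s) (Nat.zero_le _) (htL s).le
    have b3 := hmono (t s + 1) L (htL s) le_rfl
    have hd1 : (1 : ℝ) ≤ d := by exact_mod_cast hd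
    have hκ : 4 * (d * ((D + 1) * ε)) + ε ≤ 5 * d * D * ε := by
      have : 0 ≤ (d - 1) * ε := mul_nonneg (by linarith) hε.le
      have : 0 ≤ d * (D - 6) * ε := mul_nonneg (mul_nonneg (by linarith) (by linarith)) hε.le
      nlinarith
    unfold gain
    rw [abs_le]
    constructor <;> linarith [a1.1, a1.2, a2.1, a2.2, a3.1, a3.2, a4.1, a4.2]

lemma card_lab (k m : ℕ) : Fintype.card ((s : Fin m) → {r : Fin m // r ≤ s} → Fin k)
    = k ^ (∑ s ∈ Finset.range m, (s + 1)) := by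
  rw [Fintype.card_pi]
  have : ∀ s : Fin m, Fintype.card ({r : Fin m // r ≤ s} → Fin k) = k ^ ((s : ℕ) + 1) := by
    intro s
    rw [Fintype.card_fun, Fintype.card_fin]
    congr 1
    have := Fin.card_Iic s
    rw [Fintype.card_subtype]
    rw [← this]
    congr 1
    ext r; simp
  simp only [this]
  rw [Finset.prod_pow_eq_pow_sum, Fin.sum_univ_eq_sum_range (fun s => s + 1)]

lemma sum_lab (K : ℕ) : ∑ s ∈ Finset.range (4 * K), (s + 1) = (8 * K + 2) * K := by
  have h : ∀ m, (∑ s ∈ Finset.range m, (s + 1)) * 2 = m * (m + 1) := by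
    intro m
    induction m with
    | zero => simp
    | succ m ih => rw [Finset.sum_range_succ, add_mul, ih]; ring
  have := h (4 * K)
  nlinarith

lemma cubeD_bounds (n k d : ℕ) (hk : 2 ≤ k) (hd : 0 < d) (h4 : 4 * k * d ≤ n) :
    6 ≤ cubeD n k d ∧ (n : ℝ) ≤ cubeD n k d ^ 2 := by
  have hn : 8 ≤ n := by nlinarith
  have hnR : (8 : ℝ) ≤ n := by exact_mod_cast hn
  have h16 : 16 ≤ n * k * d := by nlinarith [Nat.mul_le_mul hn hk]
  have h16R : (16 : ℝ) ≤ (n : ℝ) * k * d := by exact_mod_cast h16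
  have hlog : (9 / 4 : ℝ) ≤ Real.log ((n : ℝ) * k * d) := by
    have h1 : Real.log 16 ≤ Real.log ((n : ℝ) * k * d) := Real.log_le_log (by norm_num) h16R
    have h2 : Real.log 16 = 4 * Real.log 2 := by
      rw [show (16 : ℝ) = 2 ^ 4 by norm_num, Real.log_pow]; norm_num
    linarith [Real.log_two_gt_d9]
  unfold cubeD
  constructor
  · apply Real.le_sqrt_of_sq_le; nlinarith
  · rw [Real.sq_sqrt (by positivity)]; nlinarith

lemma numeric (n k d : ℕ) (hk : 0 < k) (hd : 0 < d) (h4 : 4 * k * d ≤ n)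
    (D ε σ : ℝ) (hD : 6 ≤ D) (hDn : (n : ℝ) ≤ D ^ 2) (hε : 0 < ε) (hε1 : ε ≤ 1) (hσ : 0 < σ) :
    ((n ^ (4 * k * d) * (k ^ (4 * k * d) * (k ^ (∑ s ∈ Finset.range (4 * k * d), (s + 1))
      * ((n + 1) ^ k * ((⌊n * D / ε⌋₊ + 1) ^ d) ^ k))) : ℕ) : ℝ)
      * ((1 / σ) * (2 * Real.sqrt (2 * (5 * d * D * ε) * n))) ^ (4 * k * d)
    ≤ (6400 * (k : ℝ) ^ (8 * k * d + 4) * (d : ℝ) ^ 11 * D ^ 5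
                        * (n : ℝ) ^ ((8 : ℝ) + 1 / (d : ℝ)) * ε / σ ^ 4) ^ (k * d) := by
  have hkd : 1 ≤ k * d := Nat.mul_pos hk hd
  have hn : 1 ≤ n := by nlinarith
  have hkn : k ≤ n := by nlinarith
  have hnR : (1 : ℝ) ≤ n := by exact_mod_cast hn
  have hkR : (1 : ℝ) ≤ k := by exact_mod_cast hk
  have hdR : (1 : ℝ) ≤ d := by exact_mod_cast hd
  have hknR : (k : ℝ) ≤ n := by exact_mod_cast hkn
  have hDpos : 0 < D := by linarith
  set K := k * d with hK
  set ν : ℝ := (n : ℝ) ^ (1 / (d : ℝ)) with hν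
  have hνpos : 0 < ν := Real.rpow_pos_of_pos (by linarith) _
  have hνd : ν ^ d = n := by
    rw [hν, one_div, Real.rpow_inv_natCast_pow (by linarith) hd.ne']
  have hrp : (n : ℝ) ^ ((8 : ℝ) + 1 / (d : ℝ)) = (n : ℝ) ^ 8 * ν := by
    rw [Real.rpow_add (by linarith), hν]
    congr 1
    exact_mod_cast Real.rpow_natCast (n : ℝ) 8
  have hm : 4 * k * d = 4 * K := by rw [hK]; ring
  have hm8 : 8 * k * d + 4 = 8 * K + 4 := by rw [hK]; ring
  rw [hm, hm8, sum_lab, hrp]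
  push_cast
  have e1 : ((n : ℝ) + 1) ^ k ≤ (2 * ν) ^ K := by
    calc ((n : ℝ) + 1) ^ k ≤ (2 ^ d * n) ^ k := by
          have : (2 : ℝ) ≤ 2 ^ d := by
            calc (2 : ℝ) = 2 ^ 1 := by norm_num
              _ ≤ 2 ^ d := pow_le_pow_right₀ (by norm_num) hd
          gcongr
          nlinarith
      _ = (2 * ν) ^ K := by rw [← hνd, ← mul_pow, ← pow_mul, hK, mul_comm d k]
  have e2 : (((⌊n * D / ε⌋₊ : ℝ) + 1) ^ d) ^ k ≤ (2 * n * D / ε) ^ K := by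
    rw [← pow_mul, mul_comm d k, ← hK]
    have h1 : (⌊n * D / ε⌋₊ : ℝ) ≤ n * D / ε := Nat.floor_le (by positivity)
    have h2 : 1 ≤ n * D / ε := by
      rw [le_div_iff₀ hε]; nlinarith
    have h3 : 2 * n * D / ε = n * D / ε + n * D / ε := by ring
    rw [h3]
    gcongr
  have e3 : ((1 / σ) * (2 * Real.sqrt (2 * (5 * d * D * ε) * n))) ^ (4 * K)
      = (1600 * d ^ 2 * D ^ 2 * ε ^ 2 * n ^ 2 / σ ^ 4) ^ K := by
    rw [pow_mul]
    congr 1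
    have hs : Real.sqrt (2 * (5 * d * D * ε) * n) ^ 4 = (2 * (5 * d * D * ε) * n) ^ 2 := by
      have hss := Real.sq_sqrt (show 0 ≤ 2 * (5 * d * D * ε) * n by positivity)
      calc _ = (Real.sqrt (2 * (5 * d * D * ε) * n) ^ 2) ^ 2 := by ring
        _ = _ := by rw [hss]
    rw [mul_pow, mul_pow, hs]
    field_simp
    ring
  rw [e3]
  calc _ ≤ (n : ℝ) ^ (4 * K) * ((k : ℝ) ^ (4 * K) * ((k : ℝ) ^ ((8 * K + 2) * K)
          * ((2 * ν) ^ K * (2 * n * D / ε) ^ K)))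
          * (1600 * d ^ 2 * D ^ 2 * ε ^ 2 * n ^ 2 / σ ^ 4) ^ K := by gcongr
    _ = (n ^ 4 * (k ^ 4 * (k ^ (8 * K + 2) * ((2 * ν) * (2 * n * D / ε))))
          * (1600 * d ^ 2 * D ^ 2 * ε ^ 2 * n ^ 2 / σ ^ 4)) ^ K := by
        rw [pow_mul (n : ℝ) 4 K, pow_mul (k : ℝ) 4 K, pow_mul (k : ℝ) (8 * K + 2) K]
        simp only [← mul_pow]
    _ ≤ _ := by
        gcongr
        have f1 : (n : ℝ) ^ 4 * (k ^ 4 * (k ^ (8 * K + 2) * ((2 * ν) * (2 * n * D / ε))))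
          * (1600 * d ^ 2 * D ^ 2 * ε ^ 2 * n ^ 2 / σ ^ 4)
          = (6400 * (k : ℝ) ^ (8 * K + 4) * D ^ 3 * n ^ 7 * ν * ε / σ ^ 4) * (k ^ 2 * d ^ 2) := by
          rw [pow_add, pow_add]
          field_simp
          ring
        have f2 : 6400 * (k : ℝ) ^ (8 * K + 4) * (d : ℝ) ^ 11 * D ^ 5 * (n ^ 8 * ν) * ε / σ ^ 4
          = (6400 * (k : ℝ) ^ (8 * K + 4) * D ^ 3 * n ^ 7 * ν * ε / σ ^ 4)
            * ((n * D ^ 2) * d ^ 11) := by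
          ring
        rw [f1, f2]
        have f3 : (k : ℝ) ^ 2 ≤ n * D ^ 2 := by nlinarith
        have f4 : (d : ℝ) ^ 2 ≤ d ^ 11 := pow_le_pow_right₀ hdR (by norm_num)
        gcongr

/-- Let the random point set `X` consist of `n` independent Gaussian
perturbations (mean `0`, standard deviation `σ ≤ 1`) of fixed points of `[0,1]^d`,
conditioned on `X ⊆ [−D/2, D/2]^d` with `D = √(2n·ln(nkd))`, and assume `4kd ≤ n`. Then the
probability that some sequence of Hartigan-Wong iterations (into `k` clusters) in which
exactly `4kd` distinct points switch clusters improves the potential by at most `ε ≤ 1` — i.e.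
that `Δ_min ≤ ε` — is bounded by `(c·k^{8kd+4}·d^{11}·D^5·n^{8+1/d}·ε/σ⁴)^{kd}` for an
absolute constant `c > 0`. -/
theorem improving_sequence_min_gain :
    ∃ c : ℝ, 0 < c ∧
      ∀ (n k d : ℕ), 0 < n → 0 < k → 0 < d → 4 * k * d ≤ n →
        ∀ (Y : Fin n → Fin d → ℝ), (∀ i j, Y i j ∈ Set.Icc (0 : ℝ) 1) →
          ∀ σ : ℝ, 0 < σ → σ ≤ 1 →
            ∀ ε : ℝ, 0 < ε → ε ≤ 1 →
              ProbabilityTheory.cond (perturbedPoints n d Y σ)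
                  {ω | ∀ (i : Fin n) (j : Fin d),
                      ω i j ∈ Set.Icc (-(cubeD n k d / 2)) (cubeD n k d / 2)}
                  {ω | ∃ (L : ℕ) (seq : ℕ → Fin n → Fin k),
                    (∀ t < L, SingleMove (seq t) (seq (t + 1)) ∧
                      kmeansPot (fun i => toEuc (ω i)) (seq (t + 1))
                        < kmeansPot (fun i => toEuc (ω i)) (seq t)) ∧
                    {x : Fin n | ∃ t < L, seq (t + 1) x ≠ seq t x}.ncard = 4 * k * d ∧
                    kmeansPot (fun i => toEuc (ω i)) (seq 0)
                        - kmeansPot (fun i => toEuc (ω i)) (seq L) ≤ ε}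
                ≤ ENNReal.ofReal
                    ((c * (k : ℝ) ^ (8 * k * d + 4) * (d : ℝ) ^ 11 * cubeD n k d ^ 5
                        * (n : ℝ) ^ ((8 : ℝ) + 1 / (d : ℝ)) * ε / σ ^ 4) ^ (k * d)) := by
  refine ⟨6400, by norm_num, ?_⟩
  intro n k d hn hk hd h4 Y hY σ hσ hσ1 ε hε hε1
  -- the case of a single cluster is trivial
  rcases Nat.lt_or_ge k 2 with hk1 | hk2
  · have hk' : k = 1 := by omega
    subst hk'
    refine le_trans (le_of_eq ?_) (bot_le : (0 : ENNReal) ≤ _)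
    refine (congrArg _ ?_).trans measure_empty
    rw [Set.eq_empty_iff_forall_notMem]
    rintro ω ⟨L, seq, -, hcard, -⟩
    have : {x : Fin n | ∃ t < L, seq (t + 1) x ≠ seq t x} = ∅ := by
      rw [Set.eq_empty_iff_forall_notMem]
      rintro x ⟨t, -, h⟩
      exact h (Subsingleton.elim _ _)
    rw [this, Set.ncard_empty] at hcard
    omega
  obtain ⟨hD, hDn⟩ := cubeD_bounds n k d hk2 hd h4
  set D := cubeD n k d with hDdef
  set A : Set (Fin n → Fin d → ℝ) := {ω | ∃ (L : ℕ) (seq : ℕ → Fin n → Fin k),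
                    (∀ t < L, SingleMove (seq t) (seq (t + 1)) ∧
                      kmeansPot (fun i => toEuc (ω i)) (seq (t + 1))
                        < kmeansPot (fun i => toEuc (ω i)) (seq t)) ∧
                    {x : Fin n | ∃ t < L, seq (t + 1) x ≠ seq t x}.ncard = 4 * k * d ∧
                    kmeansPot (fun i => toEuc (ω i)) (seq 0)
                        - kmeansPot (fun i => toEuc (ω i)) (seq L) ≤ ε} with hA
  have hE : {ω : Fin n → Fin d → ℝ | ∀ (i : Fin n) (j : Fin d),
      ω i j ∈ Set.Icc (-(D / 2)) (D / 2)}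
      = Set.univ.pi (fun _ : Fin n => Set.univ.pi (fun _ : Fin d => Set.Icc (-(D / 2)) (D / 2))) := by
    ext ω
    simp only [Set.mem_pi, Set.mem_univ, true_implies]
    exact Iff.rfl
  rw [hE]
  have hEm1 : MeasurableSet (Set.univ.pi (fun _ : Fin d => Set.Icc (-(D / 2)) (D / 2))) :=
    MeasurableSet.univ_pi fun _ => measurableSet_Icc
  have hEm : MeasurableSet (Set.univ.pi (fun _ : Fin n => Set.univ.pi
      (fun _ : Fin d => Set.Icc (-(D / 2)) (D / 2)))) :=
    MeasurableSet.univ_pi fun _ => hEm1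
  have hg0 : ∀ i j, gaussianReal (Y i j) ((σ ^ 2).toNNReal) (Set.Icc (-(D / 2)) (D / 2)) ≠ 0 := by
    intro i j h
    have := gauss_box (Y i j) σ D (hY i j) hσ hσ1 hD
    rw [h] at this
    simp at this
  rw [← cond_inter_self hEm]
  set ρ : Fin n → Fin d → Measure ℝ := fun i j =>
    ProbabilityTheory.cond (gaussianReal (Y i j) ((σ ^ 2).toNNReal)) (Set.Icc (-(D / 2)) (D / 2))
    with hρ
  have hρp : ∀ i j, IsProbabilityMeasure (ρ i j) := fun i j => cond_isProbabilityMeasure (hg0 i j)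
  have hcond : ProbabilityTheory.cond (perturbedPoints n d Y σ)
      (Set.univ.pi (fun _ : Fin n => Set.univ.pi (fun _ : Fin d => Set.Icc (-(D / 2)) (D / 2))))
      = Measure.pi (fun i => Measure.pi (fun j => ρ i j)) := by
    unfold perturbedPoints
    rw [cond_pi _ _ (fun _ => hEm1)]
    · congr 1
      funext i
      rw [cond_pi _ _ (fun _ => measurableSet_Icc) (hg0 i)]
    · intro i
      rw [Measure.pi_pi]
      exact Finset.prod_ne_zero_iff.2 fun j _ => hg0 i j
  rw [hcond]
  set κ : ℝ := 5 * d * D * ε with hκ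
  have hκ0 : 0 ≤ κ := by positivity
  let Dat := (Fin (4 * k * d) → Fin n) × (Fin (4 * k * d) → Fin k) ×
    ((s : Fin (4 * k * d)) → {r : Fin (4 * k * d) // r ≤ s} → Fin k) ×
    (Fin k → Fin (n + 1)) × (Fin k → Fin d → Fin (⌊n * D / ε⌋₊ + 1))
  let Good : Dat → Prop := fun δ =>
    (Function.Injective δ.1 ∧ (∀ s, δ.2.1 s ≠ lka δ.2.1 δ.2.2.1 s s) ∧
      (∀ s, 0 ≤ Msum δ.2.1 (lka δ.2.1 δ.2.2.1 s) (fun i => ((δ.2.2.2.1 i : ℕ) : ℝ)) (δ.2.1 s)) ∧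
      (∀ s, 1 ≤ Msum δ.2.1 (lka δ.2.1 δ.2.2.1 s) (fun i => ((δ.2.2.2.1 i : ℕ) : ℝ))
        (lka δ.2.1 δ.2.2.1 s s)) ∧
      (∀ s, Msum δ.2.1 (lka δ.2.1 δ.2.2.1 s) (fun i => ((δ.2.2.2.1 i : ℕ) : ℝ))
        (lka δ.2.1 δ.2.2.1 s s) ≤ n))
  let Ev : Dat → Set (Fin n → Fin d → ℝ) := fun δ => {ω | Good δ ∧
    ∀ s, |gain δ.1 δ.2.1 δ.2.2.1 (fun i => ((δ.2.2.2.1 i : ℕ) : ℝ))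
        (fun i c => -(n * (D / 2)) + ((δ.2.2.2.2 i c : ℕ) : ℝ) * ε) s ω| ≤ κ}
  set q : ENNReal := (ENNReal.ofReal (1 / σ) * ENNReal.ofReal (2 * Real.sqrt (2 * κ * n)))
    ^ (4 * k * d) with hq
  have hEv : ∀ δ, Measure.pi (fun i => Measure.pi (fun j => ρ i j)) (Ev δ) ≤ q := by
    intro δ
    by_cases hG : Good δ
    · obtain ⟨g1, g2, g3, g4, g5⟩ := hG
      refine (measure_mono ?_).trans (gain_prob hn hd ρ (1 / σ)
        (fun i j S => condgauss_le (Y i j) σ D (hY i j) hσ hσ1 hD S) δ.1 g1 δ.2.1 δ.2.2.1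
        (fun i => ((δ.2.2.2.1 i : ℕ) : ℝ))
        (fun i c => -(n * (D / 2)) + ((δ.2.2.2.2 i c : ℕ) : ℝ) * ε) g2 g3 g4 g5 κ hκ0)
      exact fun ω hω => hω.2
    · have : Ev δ = ∅ := by
        rw [Set.eq_empty_iff_forall_notMem]
        exact fun ω hω => hG hω.1
      rw [this, measure_empty]
      exact bot_le
  have hsub : (Set.univ.pi (fun _ : Fin n => Set.univ.pi
      (fun _ : Fin d => Set.Icc (-(D / 2)) (D / 2)))) ∩ A ⊆ ⋃ δ, Ev δ := by
    rintro ω ⟨hω, L, seq, hstep, hcard, himp⟩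
    have hω' : ∀ i j, |ω i j| ≤ D / 2 := fun i j =>
      abs_le.2 (hω i (Set.mem_univ _) j (Set.mem_univ _))
    obtain ⟨e, l0, lab, N, g, hgood, hgain⟩ :=
      exists_data hd D ε hD hε hε1 ω hω' L seq hstep hcard himp
    exact Set.mem_iUnion.2 ⟨(e, l0, lab, N, g), hgood, hgain⟩
  have hcardD : Fintype.card Dat = n ^ (4 * k * d) * (k ^ (4 * k * d)
      * (k ^ (∑ s ∈ Finset.range (4 * k * d), (s + 1))
      * ((n + 1) ^ k * ((⌊n * D / ε⌋₊ + 1) ^ d) ^ k))) := by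
    simp only [Dat, Fintype.card_prod, card_lab, Fintype.card_fun, Fintype.card_fin]
  calc _ ≤ _ := measure_mono hsub
    _ ≤ ∑ δ, Measure.pi (fun i => Measure.pi (fun j => ρ i j)) (Ev δ) :=
        measure_iUnion_fintype_le _ _
    _ ≤ ∑ _δ : Dat, q := Finset.sum_le_sum fun δ _ => hEv δ
    _ = (Fintype.card Dat : ENNReal) * q := by simp
    _ = ENNReal.ofReal ((Fintype.card Dat : ℝ)
        * ((1 / σ) * (2 * Real.sqrt (2 * κ * n))) ^ (4 * k * d)) := by
        rw [ENNReal.ofReal_mul (by positivity), ENNReal.ofReal_natCast,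
          ENNReal.ofReal_pow (by positivity), ENNReal.ofReal_mul (by positivity)]
    _ ≤ _ := by
        apply ENNReal.ofReal_le_ofReal
        rw [hcardD]
        exact numeric n k d hk hd h4 D ε σ hD hDn hε hε1 hσ
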